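/- Let s ≥ 1 and n = T_s + 1. Then a partition λ of n satisfies deg(λ) = Δ_n if and only if λ = (s+1, s−1, s−2, ..., 1) or λ = (s, s−1, ..., 2, 1, 1). In particular, the number of degree-maximizing partitions of n is exactly 2. -/

import Mathlib

/-!
Since `gapBonus` and `multBonus` are at most `r = supp lam`, the degree is at most `r * (r + 1)`,
which is `s * (s - 1)` at best when `r < s`. For a partition of `T s + 1` the case `r > s` is
impossible, because `r` distinct positive integers add up to at least `T r`.

When `r = s`, the distinct part sizes add up to `T s` or to `T s + 1`. Comparing them with
`{1, …, s}`, every part size outside this interval costs at least one unit of the sum, so at most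
one of them lies outside. Hence the part sizes are `1, …, s`, with an extra part `1`, or
`1, …, s - 1, s + 1`, without repetition. Exactly one of the two bonuses is then `1` and the other
is `0`, so both partitions have degree `s * (s - 1) + 1`.
-/

namespace PartitionDegree

/-- The `m`-th triangular number. -/
def T (m : ℕ) : ℕ := m * (m + 1) / 2

/-- The number of distinct part sizes of a partition. -/
def supp {n : ℕ} (lam : n.Partition) : ℕ := lam.parts.toFinset.card

/-- The gap-bonus count: distinct part sizes `L ≥ 2` such that `L - 1` is not a part size. -/
def gapBonus {n : ℕ} (lam : n.Partition) : ℕ :=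
  (lam.parts.toFinset.filter (fun L => 2 ≤ L ∧ (L - 1) ∉ lam.parts)).card

/-- The multiplicity-bonus count: distinct part sizes occurring with multiplicity at least 2. -/
def multBonus {n : ℕ} (lam : n.Partition) : ℕ :=
  (lam.parts.toFinset.filter (fun L => 2 ≤ lam.parts.count L)).card

/-- The degree of a partition in the partition graph. -/
def deg {n : ℕ} (lam : n.Partition) : ℕ :=
  supp lam * (supp lam - 1) + gapBonus lam + multBonus lam

/-- The maximal degree over all partitions of `n`. -/
def maxDeg (n : ℕ) : ℕ := Finset.univ.sup (fun lam : n.Partition => deg lam)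

/-- `ρ(q)`: the maximum of `a + b` over pairs with `T a + T b ≤ q`. -/
noncomputable def rho (q : ℕ) : ℕ := sSup {c : ℕ | ∃ a b : ℕ, c = a + b ∧ T a + T b ≤ q}

/-- `mu` is the conjugate of `lam`: for each `k ≥ 1`, the multiplicity of `k` in `mu`
equals (number of parts of `lam` that are `≥ k`) minus (number of parts `≥ k + 1`). -/
def IsConjugate {n : ℕ} (lam mu : n.Partition) : Prop :=
  ∀ k : ℕ, 1 ≤ k →
    mu.parts.count k =
      Multiset.countP (fun p => k ≤ p) lam.parts -
        Multiset.countP (fun p => k + 1 ≤ p) lam.parts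

lemma T_succ (m : ℕ) : T (m + 1) = T m + (m + 1) := by
  simpa [T, mul_comm] using Nat.triangle_succ (m + 1)

lemma T_monotone : Monotone T :=
  monotone_nat_of_le_succ fun m => (T_succ m).symm ▸ Nat.le_add_right _ _

lemma T_add_one_lt_T_succ {m : ℕ} (hm : 1 ≤ m) : T m + 1 < T (m + 1) := by
  rw [T_succ]
  omega

lemma sum_Icc_one_eq_T (m : ℕ) : ∑ x ∈ Finset.Icc 1 m, x = T m := by
  induction m with
  | zero => rfl
  | succ m ih => rw [Finset.sum_Icc_succ_top (Nat.le_add_left 1 m), ih, T_succ]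

section PositiveFinset

variable {S : Finset ℕ}

lemma card_sdiff_Icc_one_card : (S \ Finset.Icc 1 S.card).card = (Finset.Icc 1 S.card \ S).card :=
  Finset.card_sdiff_comm (by simp)

variable (hS : ∀ x ∈ S, 0 < x)
include hS

lemma card_lt_of_mem_sdiff_Icc {x : ℕ} (hx : x ∈ S \ Finset.Icc 1 S.card) : S.card < x := by
  simp only [Finset.mem_sdiff, Finset.mem_Icc] at hx
  have := hS x hx.1
  omega

/-- Trading the elements of `Icc 1 S.card \ S` for those of `S \ Icc 1 S.card` replaces numbers
that are at most `S.card` by as many numbers that exceed it. -/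
lemma T_card_add_card_sdiff_le_sum :
    T S.card + (S \ Finset.Icc 1 S.card).card ≤ ∑ x ∈ S, x := by
  have hout : (S \ Finset.Icc 1 S.card).card * (S.card + 1) ≤
      ∑ x ∈ S \ Finset.Icc 1 S.card, x :=
    Finset.card_nsmul_le_sum _ id _ fun x hx => card_lt_of_mem_sdiff_Icc hS hx
  have hmissing : ∑ x ∈ Finset.Icc 1 S.card \ S, x ≤
      (S \ Finset.Icc 1 S.card).card * S.card := by
    rw [card_sdiff_Icc_one_card]
    exact Finset.sum_le_card_nsmul _ _ _ fun x hx =>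
      (Finset.mem_Icc.mp (Finset.mem_sdiff.mp hx).1).2
  rw [← sum_Icc_one_eq_T, ← Finset.sum_inter_add_sum_sdiff (Finset.Icc 1 S.card) S,
    ← Finset.sum_inter_add_sum_sdiff S (Finset.Icc 1 S.card), Finset.inter_comm]
  linarith

lemma T_card_le_sum : T S.card ≤ ∑ x ∈ S, x :=
  (Nat.le_add_right _ _).trans (T_card_add_card_sdiff_le_sum hS)

lemma eq_Icc_of_sum_eq_T_card (hsum : ∑ x ∈ S, x = T S.card) : S = Finset.Icc 1 S.card := by
  have hle := T_card_add_card_sdiff_le_sum hS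
  have hsub : S ⊆ Finset.Icc 1 S.card := by
    rw [← Finset.sdiff_eq_empty_iff_subset, ← Finset.card_eq_zero]
    omega
  exact Finset.eq_of_subset_of_card_le hsub (by simp)

lemma eq_insert_of_sum_eq_T_card_add_one (hsum : ∑ x ∈ S, x = T S.card + 1) :
    S = insert (S.card + 1) (Finset.Icc 1 (S.card - 1)) := by
  have hnot_sub : ¬ S ⊆ Finset.Icc 1 S.card := fun hsub => by
    rw [Finset.eq_of_subset_of_card_le hsub (by simp), sum_Icc_one_eq_T] at hsum
    simp at hsum
  have hcard : (S \ Finset.Icc 1 S.card).card = 1 := by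
    have hle := T_card_add_card_sdiff_le_sum hS
    have hpos := Finset.card_pos.mpr (Finset.sdiff_nonempty.mpr hnot_sub)
    omega
  obtain ⟨b, hb⟩ := Finset.card_eq_one.mp hcard
  obtain ⟨a, ha⟩ := Finset.card_eq_one.mp (card_sdiff_Icc_one_card.symm.trans hcard)
  have hlt : S.card < b := card_lt_of_mem_sdiff_Icc hS (by simp [hb])
  have ha_mem : a ∈ Finset.Icc 1 S.card \ S := by simp [ha]
  have hba : b = a + 1 := by
    have hsumS := Finset.sum_inter_add_sum_sdiff S (Finset.Icc 1 S.card) id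
    have hsumI := Finset.sum_inter_add_sum_sdiff (Finset.Icc 1 S.card) S id
    simp only [hb, ha, Finset.sum_singleton, id, sum_Icc_one_eq_T, hsum] at hsumS hsumI
    rw [Finset.inter_comm] at hsumI
    omega
  have hle : a ≤ S.card := (Finset.mem_Icc.mp (Finset.mem_sdiff.mp ha_mem).1).2
  obtain rfl : a = S.card := by omega
  calc S = S \ Finset.Icc 1 S.card ∪ Finset.Icc 1 S.card \ (Finset.Icc 1 S.card \ S) := by
        rw [sdiff_sdiff_right_self, Finset.inf_eq_inter, Finset.inter_comm,
          Finset.sdiff_union_inter]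
    _ = insert (S.card + 1) (Finset.Icc 1 (S.card - 1)) := by
        rw [ha, hb, hba]
        ext x
        simp only [Finset.mem_union, Finset.mem_sdiff, Finset.mem_singleton, Finset.mem_insert,
          Finset.mem_Icc]
        omega

end PositiveFinset

section Partition

variable {n : ℕ} (lam : n.Partition)

lemma pos_of_mem_toFinset_parts : ∀ x ∈ lam.parts.toFinset, 0 < x :=
  fun _ hx => lam.parts_pos (Multiset.mem_toFinset.mp hx)

lemma exists_parts_eq_toFinset_add :
    ∃ (k : ℕ) (mu : k.Partition),
      lam.parts = lam.parts.toFinset.val + mu.parts ∧ ∑ x ∈ lam.parts.toFinset, x + k = n := by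
  obtain ⟨R, hR⟩ := Multiset.le_iff_exists_add.mp (Multiset.dedup_le lam.parts)
  refine ⟨R.sum, ⟨R, fun hx => lam.parts_pos (hR ▸ Multiset.mem_add.mpr (.inr hx)), rfl⟩, hR, ?_⟩
  rw [Finset.sum_eq_multiset_sum, Multiset.map_id', Multiset.toFinset_val, ← Multiset.sum_add,
    ← hR, lam.parts_sum]

lemma T_supp_le : T (supp lam) ≤ n := by
  obtain ⟨k, -, -, hsum⟩ := exists_parts_eq_toFinset_add lam
  calc T (supp lam) ≤ ∑ x ∈ lam.parts.toFinset, x := T_card_le_sum (pos_of_mem_toFinset_parts lam)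
    _ ≤ n := Nat.le.intro hsum

lemma deg_le_supp_mul_succ : deg lam ≤ supp lam * (supp lam + 1) := by
  have hgap : gapBonus lam ≤ supp lam := Finset.card_filter_le _ _
  have hmult : multBonus lam ≤ supp lam := Finset.card_filter_le _ _
  calc deg lam ≤ supp lam * (supp lam - 1) + supp lam + supp lam := by unfold deg; gcongr
    _ = supp lam * (supp lam + 1) := by
      cases supp lam with
      | zero => rfl
      | succ r => rw [Nat.add_sub_cancel]; ring

variable {lam}

lemma supp_le_of_lt_T_succ {s : ℕ} (h : n < T (s + 1)) : supp lam ≤ s :=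
  Nat.le_of_lt_succ (T_monotone.reflect_lt ((T_supp_le lam).trans_lt h))

lemma deg_le_of_supp_lt {s : ℕ} (h : supp lam < s) : deg lam ≤ s * (s - 1) :=
  calc deg lam ≤ supp lam * (supp lam + 1) := deg_le_supp_mul_succ lam
    _ ≤ (s - 1) * s := Nat.mul_le_mul (Nat.le_sub_one_of_lt h) h
    _ = s * (s - 1) := mul_comm _ _

lemma gapBonus_eq_zero_of_toFinset_eq_Icc {m : ℕ} (h : lam.parts.toFinset = Finset.Icc 1 m) :
    gapBonus lam = 0 := by
  rw [gapBonus, Finset.card_eq_zero, Finset.filter_eq_empty_iff]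
  intro x hx
  rw [h, Finset.mem_Icc] at hx
  rw [← Multiset.mem_toFinset, h, Finset.mem_Icc]
  omega

lemma multBonus_eq_zero_of_nodup (h : lam.parts.Nodup) : multBonus lam = 0 := by
  rw [multBonus, Finset.card_eq_zero, Finset.filter_eq_empty_iff]
  exact fun x _ => Nat.not_le_of_lt (Nat.lt_succ_of_le (Multiset.nodup_iff_count_le_one.mp h x))

lemma multBonus_eq_one_of_parts_eq_cons {a : ℕ} {S : Finset ℕ} (h : lam.parts = a ::ₘ S.val)
    (ha : a ∈ S) : multBonus lam = 1 := by
  rw [multBonus, Finset.card_eq_one]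
  refine ⟨a, Finset.ext fun x => ?_⟩
  simp only [h, Finset.mem_filter, Multiset.mem_toFinset, Multiset.mem_cons, Finset.mem_val,
    Multiset.count_cons, Multiset.count_eq_of_nodup S.nodup, Finset.mem_singleton]
  grind

end Partition

section Maximizers

variable (s : ℕ)

/-- The partition `(s + 1, s - 1, s - 2, …, 1)`, the staircase with its largest part increased
by `1`; for `s = 0` it is `(1)`. -/
def raisedStaircase : (T s + 1).Partition where
  parts := (s + 1) ::ₘ (Finset.Icc 1 (s - 1)).val
  parts_pos := by grind
  parts_sum := by
    rw [Multiset.sum_cons, (Finset.sum_val _).trans (sum_Icc_one_eq_T (s - 1))]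
    cases s with
    | zero => rfl
    | succ t => rw [T_succ, Nat.add_sub_cancel]; ring

/-- The partition `(s, s - 1, …, 2, 1, 1)`, the staircase with an extra part `1`. -/
def extraOneStaircase : (T s + 1).Partition where
  parts := 1 ::ₘ (Finset.Icc 1 s).val
  parts_pos := by grind
  parts_sum := by
    rw [Multiset.sum_cons, (Finset.sum_val _).trans (sum_Icc_one_eq_T s), add_comm]

lemma toFinset_parts_raisedStaircase :
    (raisedStaircase s).parts.toFinset = insert (s + 1) (Finset.Icc 1 (s - 1)) := by
  simp [raisedStaircase]

variable {s}

lemma eq_raisedStaircase_or_eq_extraOneStaircase {lam : (T s + 1).Partition} (h : supp lam = s) :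
    lam = raisedStaircase s ∨ lam = extraOneStaircase s := by
  obtain ⟨k, mu, hparts, hsum⟩ := exists_parts_eq_toFinset_add lam
  have hpos := pos_of_mem_toFinset_parts lam
  have hcard : lam.parts.toFinset.card = s := h
  have hle := T_card_le_sum hpos
  rw [hcard] at hle
  obtain rfl | rfl : k = 0 ∨ k = 1 := by omega
  · left
    have hset := eq_insert_of_sum_eq_T_card_add_one hpos (by rw [hcard]; exact hsum)
    rw [hcard] at hset
    rw [Nat.Partition.ext_iff, hparts, hset, Nat.Partition.partition_zero_parts, add_zero,
      Finset.insert_val_of_notMem (by simp)]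
    rfl
  · right
    have hset := eq_Icc_of_sum_eq_T_card hpos (by rw [hcard]; omega)
    rw [hcard] at hset
    rw [Nat.Partition.ext_iff, hparts, hset, Nat.Partition.partition_one_parts, add_comm,
      Multiset.singleton_add]
    rfl

variable (hs : 1 ≤ s)
include hs

lemma toFinset_parts_extraOneStaircase :
    (extraOneStaircase s).parts.toFinset = Finset.Icc 1 s := by
  simp [extraOneStaircase, hs]

lemma raisedStaircase_ne_extraOneStaircase : raisedStaircase s ≠ extraOneStaircase s := by
  intro h
  have hmem : s + 1 ∈ (raisedStaircase s).parts.toFinset := by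
    simp [toFinset_parts_raisedStaircase]
  rw [h, toFinset_parts_extraOneStaircase hs] at hmem
  simp at hmem

lemma deg_raisedStaircase : deg (raisedStaircase s) = s * (s - 1) + 1 := by
  have hsupp : supp (raisedStaircase s) = s := by
    rw [supp, toFinset_parts_raisedStaircase, Finset.card_insert_of_notMem (by simp), Nat.card_Icc]
    omega
  have hgap : gapBonus (raisedStaircase s) = 1 := by
    rw [gapBonus, Finset.card_eq_one]
    refine ⟨s + 1, Finset.ext fun x => ?_⟩
    simp only [← Multiset.mem_toFinset, toFinset_parts_raisedStaircase, Finset.mem_filter,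
      Finset.mem_insert, Finset.mem_Icc, Finset.mem_singleton]
    omega
  have hnodup : (raisedStaircase s).parts.Nodup :=
    (Multiset.nodup_cons (s := (Finset.Icc 1 (s - 1)).val)).mpr ⟨by simp, Finset.nodup _⟩
  have hmult : multBonus (raisedStaircase s) = 0 := multBonus_eq_zero_of_nodup hnodup
  rw [deg, hsupp, hgap, hmult]

lemma deg_extraOneStaircase : deg (extraOneStaircase s) = s * (s - 1) + 1 := by
  have hset := toFinset_parts_extraOneStaircase hs
  have hsupp : supp (extraOneStaircase s) = s := by simp [supp, hset]
  have hgap : gapBonus (extraOneStaircase s) = 0 := gapBonus_eq_zero_of_toFinset_eq_Icc hset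
  have hmult : multBonus (extraOneStaircase s) = 1 :=
    multBonus_eq_one_of_parts_eq_cons rfl (Finset.left_mem_Icc.mpr hs)
  rw [deg, hsupp, hgap, hmult]

lemma maxDeg_T_add_one : maxDeg (T s + 1) = s * (s - 1) + 1 := by
  refine le_antisymm (Finset.sup_le fun lam _ => ?_) ?_
  · obtain hlt | heq := (supp_le_of_lt_T_succ (T_add_one_lt_T_succ hs)).lt_or_eq
    · exact (deg_le_of_supp_lt hlt).trans (Nat.le_succ _)
    · obtain rfl | rfl := eq_raisedStaircase_or_eq_extraOneStaircase heq
      · exact (deg_raisedStaircase hs).le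
      · exact (deg_extraOneStaircase hs).le
  · rw [← deg_raisedStaircase hs]
    exact Finset.le_sup (f := deg) (Finset.mem_univ (raisedStaircase s))

lemma deg_eq_maxDeg_iff (lam : (T s + 1).Partition) :
    deg lam = maxDeg (T s + 1) ↔ lam = raisedStaircase s ∨ lam = extraOneStaircase s := by
  rw [maxDeg_T_add_one hs]
  constructor
  · intro hdeg
    refine eq_raisedStaircase_or_eq_extraOneStaircase
      ((supp_le_of_lt_T_succ (T_add_one_lt_T_succ hs)).eq_of_not_lt fun hlt => ?_)
    have := deg_le_of_supp_lt hlt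
    omega
  · rintro (rfl | rfl)
    · exact deg_raisedStaircase hs
    · exact deg_extraOneStaircase hs

end Maximizers

/-- for `n = T s + 1`, the degree maximizers are exactly
`(s+1, s-1, …, 1)` and `(s, s-1, …, 1, 1)`, and there are exactly `2` of them. -/
theorem first_window (s : ℕ) (hs : 1 ≤ s) :
    (∀ lam : (T s + 1).Partition,
        deg lam = maxDeg (T s + 1) ↔
          lam.parts = (s + 1) ::ₘ (Finset.Icc 1 (s - 1)).val ∨
            lam.parts = 1 ::ₘ (Finset.Icc 1 s).val) ∧
      (Finset.univ.filter
          (fun lam : (T s + 1).Partition => deg lam = maxDeg (T s + 1))).card = 2 := by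
  refine ⟨fun lam => ?_, ?_⟩
  · rw [deg_eq_maxDeg_iff hs, Nat.Partition.ext_iff, Nat.Partition.ext_iff]
    rfl
  · have hmax : Finset.univ.filter
        (fun lam : (T s + 1).Partition => deg lam = maxDeg (T s + 1)) =
          {raisedStaircase s, extraOneStaircase s} := by
      ext lam
      simp [deg_eq_maxDeg_iff hs]
    rw [hmax, Finset.card_pair (raisedStaircase_ne_extraOneStaircase hs)]

end PartitionDegree
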